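/- arXiv:2305.19176 — 4 statements merged into one kernel-verified Lean document; each statement's English description precedes it below -/
import Mathlib

section
/- Let D = (N,A) be a finite directed graph with positive integer transit times τ, time horizon T, and let k be a commodity with origin o_k, destination d_k, release time r_k, deadline l_k ≤ T, and designated subgraph D^k ⊆ D. Let N_S ⊆ N × {0,...,T} satisfy property (P1) (in particular (o_k,r_k), (d_k,l_k) ∈ N_S and (v,0),(v,T) ∈ N_S for all v ∈ N) and let D_S be the partial network built from N_S by property (P2). If Q is a feasible trajectory for k in the fully time-expanded network D_T — i.e., a directed path from (o_k,r_k) to (d_k,l_k) using holdover arcs and movement arcs whose underlying flat arcs lie in D^k and whose transit times are exact — then replacing each movement arc a of Q by μ(a) and inserting holdover arcs yields a well-defined feasible trajectory Q̂ for k in D_S: the rounded arrival time at each intermediate node is at most the rounded departure time from it, Q̂ goes from (o_k,r_k) to (d_k,l_k), all underlying flat arcs of Q̂ lie in D^k, and Q̂ has the same underlying flat path in D as Q. -/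
/-! Rounding down to a set of available times never increases a time, is monotone, stays
above every available time below it, and lands in the set as soon as the set contains `0`. Lowering a departure
time therefore lowers the corresponding arrival, so by monotonicity the rounded arrival stays
below the rounded next departure; the release time survives because it is itself available
at the origin. -/

/-- The largest element of `S` that is at most `t` (and `0` if there is none;
in our setting `0 ∈ S`, so it is the genuine maximum). -/
def roundDown (S : Finset ℕ) (t : ℕ) : ℕ := Nat.findGreatest (· ∈ S) t

/-- The movement arcs of the partial time-expanded network built from the timed-node set
(given as the family `NS` of available times at each node) by property (P2), over a set
of flat arcs `A`. -/
def partialArcs {N : Type*} (A : Set (N × N)) (τ : N × N → ℕ) (T : ℕ)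
    (NS : N → Finset ℕ) : Set ((N × ℕ) × (N × ℕ)) :=
  {e | ∃ v w s, (v, w) ∈ A ∧ s ∈ NS v ∧ s + τ (v, w) ≤ T ∧
    e = ((v, s), (w, roundDown (NS w) (s + τ (v, w))))}

theorem roundDown_le (S : Finset ℕ) (t : ℕ) : roundDown S t ≤ t :=
  Nat.findGreatest_le t

theorem roundDown_mem {S : Finset ℕ} (h0 : 0 ∈ S) (t : ℕ) : roundDown S t ∈ S :=
  Nat.findGreatest_spec (P := (· ∈ S)) (Nat.zero_le t) h0

theorem roundDown_mono (S : Finset ℕ) {s t : ℕ} (h : s ≤ t) : roundDown S s ≤ roundDown S t :=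
  Nat.findGreatest_mono_right _ h

theorem le_roundDown {S : Finset ℕ} {s t : ℕ} (hs : s ∈ S) (h : s ≤ t) : s ≤ roundDown S t :=
  Nat.le_findGreatest (P := (· ∈ S)) h hs

/-- Rounding a feasible trajectory of the fully time-expanded network into the partial
network.  A feasible trajectory `Q` for a commodity `k` in `D_T` is given by its flat path
`v 0 = o_k, v 1, …, v m = d_k` (all arcs in the designated subgraph `D^k`) together with
departure times `t 0, …, t (m-1)` respecting the release time, the deadline and the exact
transit times.  Replacing each movement arc by its image under `μ` (round the departure
time down to the nearest time of `N_S`, then round the arrival accordingly) and inserting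
holdover arcs yields a well-defined feasible trajectory `Q̂` in `D_S` with the same
underlying flat path: all rounded departure times are available time points, every image
arc is an arc of `D_S` whose flat arc lies in `D^k`, the rounded arrival time at each
intermediate node is at most the rounded departure time from it, `Q̂` departs `o_k` no
earlier than `r_k`, and its (rounded) arrival time at `d_k` is at most `l_k`. -/
theorem rounded_trajectory_feasible_in_partial_network
    {N : Type*} (A Ak : Set (N × N)) (τ : N × N → ℕ) (T : ℕ)
    (hAkA : Ak ⊆ A) (hτ : ∀ a ∈ A, 0 < τ a)
    (ok dk : N) (rk lk : ℕ) (hlkT : lk ≤ T)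
    (NS : N → Finset ℕ)
    -- property (P1)
    (hP1o : rk ∈ NS ok) (hP1d : lk ∈ NS dk)
    (hP10 : ∀ v : N, 0 ∈ NS v) (hP1T : ∀ v : N, T ∈ NS v)
    (hNST : ∀ v : N, ∀ s ∈ NS v, s ≤ T)
    -- a feasible trajectory `Q` for commodity `k` in `D_T`
    (m : ℕ) (hm : 0 < m) (v : ℕ → N) (t : ℕ → ℕ)
    (hv0 : v 0 = ok) (hvm : v m = dk)
    (harc : ∀ i < m, (v i, v (i+1)) ∈ Ak)
    (hr : rk ≤ t 0)
    (hchain : ∀ i, i + 1 < m → t i + τ (v i, v (i+1)) ≤ t (i+1))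
    (hdl : t (m-1) + τ (v (m-1), v m) ≤ lk)
    (hhor : ∀ i < m, t i + τ (v i, v (i+1)) ≤ T) :
    -- the rounded departure times are available in `N_S`
    (∀ i < m, roundDown (NS (v i)) (t i) ∈ NS (v i)) ∧
    -- each image arc `μ(a)` is an arc of `D_S` whose underlying flat arc lies in `D^k`
    (∀ i < m,
      ((v i, roundDown (NS (v i)) (t i)),
        (v (i+1), roundDown (NS (v (i+1)))
          (roundDown (NS (v i)) (t i) + τ (v i, v (i+1)))))
        ∈ partialArcs Ak τ T NS) ∧
    -- the rounded arrival time at each intermediate node is at most the rounded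
    -- departure time from it (so the holdover arcs can be inserted)
    (∀ i, i + 1 < m →
      roundDown (NS (v (i+1))) (roundDown (NS (v i)) (t i) + τ (v i, v (i+1)))
        ≤ roundDown (NS (v (i+1))) (t (i+1))) ∧
    -- `Q̂` departs the origin no earlier than `r_k`
    rk ≤ roundDown (NS (v 0)) (t 0) ∧
    -- `Q̂` arrives at the destination no later than `l_k`
    roundDown (NS (v m)) (roundDown (NS (v (m-1))) (t (m-1)) + τ (v (m-1), v m)) ≤ lk := by
  have hdep : ∀ i, roundDown (NS (v i)) (t i) ≤ t i := fun i => roundDown_le _ _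
  refine ⟨fun i _ => roundDown_mem (hP10 _) _, fun i hi => ?_, fun i hi => ?_, ?_, ?_⟩
  · exact ⟨v i, v (i+1), _, harc i hi, roundDown_mem (hP10 _) _,
      (Nat.add_le_add_right (hdep i) _).trans (hhor i hi), rfl⟩
  · exact roundDown_mono _ ((Nat.add_le_add_right (hdep i) _).trans (hchain i hi))
  · exact le_roundDown (hv0 ▸ hP1o) hr
  · exact (roundDown_le _ _).trans ((Nat.add_le_add_right (hdep (m-1)) _).trans hdl)
end

section
/- Let D = (N,A) be a finite directed graph, 𝒦 a set of commodities with designated subgraphs D^k = (N^k, A^k) ⊆ D such that δ^+_{D^k}(d_k) = ∅ and δ^+_{D^k}(v) ≠ ∅ for all v ∈ N^k \ {d_k}, let 𝒜 be a valid arc partition, and let G = G(D,𝒜) be the auxiliary graph with commodity subgraphs G^k = (V^k, E^k). Then for every commodity k ∈ 𝒦, G^k has exactly as many nodes as D^k and exactly as many arcs as D^k, i.e., |V^k| = |N^k| and |E^k| = |A^k|. -/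
/-!
The projection `vⁱ ↦ v` restricts to a bijection `V^k → N^k`: a node `v ∈ N^k` other than
`d_k` has a nonempty out-star in `D^k`, which lies in some part of `𝒜_v` by validity and in at
most one since the parts are disjoint; the node `d_k` has an empty out-star, so its only copy
in `V^k` is the terminal one. As `E^k` consists of all pairs of nodes of `V^k` lying over an arc
of `D^k`, the induced map `vⁱwʲ ↦ vw` is then a bijection `E^k → A^k`.
-/

noncomputable section

attribute [local instance] Classical.propDecidable

/-- A copy of a node of the flat network in the auxiliary graph: `(v, none)` is the
terminal copy `v⁰`, and `(v, some B)` is the copy `vⁱ` associated with the part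
`B = A_i ∈ 𝒜_v` of the arc partition. -/
abbrev NodeCopy (N : Type*) := N × Option (Finset (N × N))

/-- The arcs of `B` leaving node `v` (the out-star `δ⁺_B(v)`). -/
def outAt {N : Type*} (B : Finset (N × N)) (v : N) : Finset (N × N) :=
  B.filter fun a => a.1 = v

/-- The node set `V^k` of the commodity subgraph `G^k` of the auxiliary graph:
one copy `(v, some B)` for each node `v ∈ N^k` and part `B ∈ 𝒜_v` with `k ∈ 𝒦(B)`
(i.e. `∅ ≠ δ⁺_{D^k}(v) ⊆ B`), together with the terminal copy `d_k⁰`. -/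
def auxVk {N : Type*} (P : N → Finset (Finset (N × N))) (Ak : Finset (N × N))
    (Nk : Finset N) (dk : N) : Finset (NodeCopy N) :=
  (Nk.biUnion fun v =>
    ((P v).filter fun B => (outAt Ak v).Nonempty ∧ outAt Ak v ⊆ B).image
      fun B => ((v, some B) : NodeCopy N)) ∪ {((dk, none) : NodeCopy N)}

/-- The arc set `E^k = {vⁱwʲ : vw ∈ A^k, vⁱ ∈ V^k, wʲ ∈ V^k}` of `G^k`. -/
def auxEk {N : Type*} (P : N → Finset (Finset (N × N))) (Ak : Finset (N × N))
    (Nk : Finset N) (dk : N) : Finset (NodeCopy N × NodeCopy N) :=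
  ((auxVk P Ak Nk dk) ×ˢ (auxVk P Ak Nk dk)).filter fun e => (e.1.1, e.2.1) ∈ Ak

theorem mem_auxVk {N : Type*} {P : N → Finset (Finset (N × N))} {Ak : Finset (N × N)}
    {Nk : Finset N} {dk : N} {x : NodeCopy N} :
    x ∈ auxVk P Ak Nk dk ↔
      (x.1 ∈ Nk ∧ ∃ B ∈ P x.1, (outAt Ak x.1).Nonempty ∧ outAt Ak x.1 ⊆ B ∧ x.2 = some B) ∨
        x = (dk, none) := by
  obtain ⟨v, o⟩ := x
  simp only [auxVk, Finset.mem_union, Finset.mem_biUnion, Finset.mem_image, Finset.mem_filter,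
    Finset.mem_singleton, Prod.mk.injEq]
  constructor
  · rintro (⟨w, hw, B, ⟨hB, hne, hs⟩, rfl, rfl⟩ | h)
    · exact Or.inl ⟨hw, B, hB, hne, hs, rfl⟩
    · exact Or.inr h
  · rintro (⟨hw, B, hB, hne, hs, rfl⟩ | h)
    · exact Or.inl ⟨v, hw, B, ⟨hB, hne, hs⟩, rfl, rfl⟩
    · exact Or.inr h

/-- The projection `vⁱ ↦ v` is a bijection from `V^k` onto `N^k`. -/
theorem bijOn_fst_auxVk {N : Type*} {P : N → Finset (Finset (N × N))} {Ak : Finset (N × N)}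
    {Nk : Finset N} {dk : N}
    (hdisj : ∀ v : N, ∀ B ∈ P v, ∀ B' ∈ P v, B ≠ B' → Disjoint B B')
    (hdNk : dk ∈ Nk) (hout_d : outAt Ak dk = ∅)
    (hout_ne : ∀ v ∈ Nk, v ≠ dk → (outAt Ak v).Nonempty)
    (hvalid : ∀ v : N, ∃ B ∈ P v, outAt Ak v ⊆ B) :
    Set.BijOn (Prod.fst : NodeCopy N → N) (auxVk P Ak Nk dk) Nk := by
  refine ⟨?_, ?_, ?_⟩
  · intro x hx
    rcases mem_auxVk.1 hx with h | rfl
    · exact h.1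
    · exact hdNk
  · rintro ⟨v, o⟩ hx ⟨w, o'⟩ hy hvw
    obtain rfl : v = w := hvw
    rcases mem_auxVk.1 hx with ⟨-, B, hB, ⟨a, ha⟩, hs, ho⟩ | h
    · rcases mem_auxVk.1 hy with ⟨-, B', hB', -, hs', ho'⟩ | hd
      · have hBB : B = B' := by
          by_contra hne
          -- Both parts contain the arc `a` of the out-star, so they are not disjoint.
          exact Finset.disjoint_left.1 (hdisj v B hB B' hB' hne) (hs ha) (hs' ha)
        simp_all
      · simp_all
    · rcases mem_auxVk.1 hy with ⟨-, B', hB', hne, -, -⟩ | h'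
      · simp_all
      · exact h.trans h'.symm
  · intro v hv
    by_cases hvd : v = dk
    · exact ⟨(dk, none), mem_auxVk.2 (Or.inr rfl), hvd.symm⟩
    · obtain ⟨B, hB, hs⟩ := hvalid v
      exact ⟨(v, some B), mem_auxVk.2 (Or.inl ⟨hv, B, hB, hout_ne v hv hvd, hs, rfl⟩), rfl⟩

/-- For every commodity `k`, the commodity subgraph `G^k` of the auxiliary graph has
exactly as many nodes and exactly as many arcs as the designated subgraph
`D^k = (N^k, A^k)`. -/
theorem aux_commodity_subgraph_same_size
    {N K : Type*}
    (A : Finset (N × N))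
    (P : N → Finset (Finset (N × N)))
    -- `𝒜_v` is a partition of `δ⁺_D(v)`
    (hsub : ∀ v : N, ∀ B ∈ P v, B ⊆ outAt A v)
    (hcover : ∀ v : N, ∀ a ∈ outAt A v, ∃ B ∈ P v, a ∈ B)
    (hdisj : ∀ v : N, ∀ B ∈ P v, ∀ B' ∈ P v, B ≠ B' → Disjoint B B')
    -- the commodities and their designated subgraphs `D^k = (N^k, A^k)`
    (Ak : K → Finset (N × N)) (Nk : K → Finset N) (d : K → N)
    (hAkA : ∀ k, Ak k ⊆ A)
    (hends : ∀ k, ∀ a ∈ Ak k, a.1 ∈ Nk k ∧ a.2 ∈ Nk k)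
    (hdNk : ∀ k, d k ∈ Nk k)
    (hout_d : ∀ k, outAt (Ak k) (d k) = ∅)
    (hout_ne : ∀ k, ∀ v ∈ Nk k, v ≠ d k → (outAt (Ak k) v).Nonempty)
    -- validity of the partition with respect to the instance
    (hvalid : ∀ (k : K) (v : N), ∃ B ∈ P v, outAt (Ak k) v ⊆ B)
    (k : K) :
    (auxVk P (Ak k) (Nk k) (d k)).card = (Nk k).card ∧
    (auxEk P (Ak k) (Nk k) (d k)).card = (Ak k).card := by
  have hbij := bijOn_fst_auxVk (P := P) hdisj (hdNk k) (hout_d k) (hout_ne k) (hvalid k)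
  refine ⟨Finset.card_nbij Prod.fst hbij.mapsTo hbij.injOn hbij.surjOn,
    Finset.card_nbij (fun e => (e.1.1, e.2.1)) ?_ ?_ ?_⟩
  · intro e he
    exact (Finset.mem_filter.1 he).2
  · intro e he f hf hef
    have he' := Finset.mem_product.1 (Finset.mem_filter.1 he).1
    have hf' := Finset.mem_product.1 (Finset.mem_filter.1 hf).1
    obtain ⟨h1, h2⟩ := Prod.mk.inj hef
    exact Prod.ext (hbij.injOn he'.1 hf'.1 h1) (hbij.injOn he'.2 hf'.2 h2)
  · rintro ⟨v, w⟩ ha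
    obtain ⟨x, hx, rfl⟩ := hbij.surjOn (hends k _ ha).1
    obtain ⟨y, hy, rfl⟩ := hbij.surjOn (hends k _ ha).2
    exact ⟨(x, y), Finset.mem_filter.2 ⟨Finset.mem_product.2 ⟨hx, hy⟩, ha⟩, rfl⟩
end
end

section
/- Let D = (N,A) be a finite directed graph with positive integer transit times τ, time horizon T, 𝒜 a valid arc partition, and G = G(D,𝒜) the auxiliary graph, whose arcs inherit the transit times of their underlying arcs in D. Let 𝒬_D be the set of trajectories (directed paths) in the fully time-expanded network D_T and 𝒬_G the set of trajectories in the fully time-expanded network G_T that end at a timed terminal node (v^0, t). Define φ_T : 𝒬_D → 𝒬_G by sending the trajectory determined by a flat path P in D together with a departure time for each arc of P to the trajectory in G_T determined by the flat path φ(P) in G with the same departure times. Then φ_T is a bijection between 𝒬_D and 𝒬_G; in particular |𝒬_D| = |𝒬_G|. -/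
/-!
Why the projection is a bijection: in a trajectory of the auxiliary graph, the copy of a node
from which a movement arc `vw` departs is forced, since it must be the part of `𝒜_v`
containing `vw`; that part exists by covering and is unique by disjointness, and the final copy
is forced to be the terminal one. Both injectivity (`proj_inj`) and surjectivity (`exists_lift`)
are therefore inductions along the list of departures, from the end of the trajectory to its
start. They use the recursive form `PreTraj` of `IsTrajectory`, in which the head departure is
compared with the next timed node (`nextNode`, `nextTime`).
-/

noncomputable section

attribute [local instance] Classical.propDecidable

/-- `x` is a genuine copy of the node `x.1` in the auxiliary graph `G(D,𝒜)`. -/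
def IsCopy {N : Type*} (P : N → Finset (Finset (N × N))) (x : NodeCopy N) : Prop :=
  ∀ B : Finset (N × N), x.2 = some B → B ∈ P x.1

/-- The arcs of the auxiliary graph `G(D,𝒜)`: there is an arc from `vⁱ` to `wʲ` exactly
when `vw ∈ A_i ∈ 𝒜_v` and `wʲ` is a copy of `w`. -/
def AuxArc {N : Type*} (P : N → Finset (Finset (N × N))) (x y : NodeCopy N) : Prop :=
  ∃ B : Finset (N × N), x.2 = some B ∧ B ∈ P x.1 ∧ (x.1, y.1) ∈ B ∧ IsCopy P y

/-- A trajectory in the fully time-expanded network (horizon `T`) of a flat graph with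
arc relation `Arc` and transit times `τ`.  Following the paper, a trajectory is fully
determined by its underlying flat path together with the departure time of each movement
arc: it is encoded as the list of (node, departure time) pairs of its movement arcs,
together with its final node.  Consecutive movement arcs must be genuine arcs, the next
departure may only happen after the previous (exact-transit-time) arrival, and all timed
nodes lie within the horizon. -/
def IsTrajectory {α : Type*} (Arc : α → α → Prop) (τ : α → α → ℕ) (T : ℕ)
    (Q : List (α × ℕ) × α) : Prop :=
  Q.1 ≠ [] ∧
  Q.1.Chain' (fun x y => Arc x.1 y.1 ∧ x.2 + τ x.1 y.1 ≤ y.2) ∧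
  (∀ x : α × ℕ, Q.1.getLast? = some x → Arc x.1 Q.2 ∧ x.2 + τ x.1 Q.2 ≤ T) ∧
  ∀ p ∈ Q.1, p.2 ≤ T

/-- The set `𝒬_D` of trajectories in the fully time-expanded network `D_T`. -/
def trajD {N : Type*} (A : Finset (N × N)) (τ : N × N → ℕ) (T : ℕ) :
    Set (List (N × ℕ) × N) :=
  {Q | IsTrajectory (fun a b => (a, b) ∈ A) (fun a b => τ (a, b)) T Q}

/-- The set `𝒬_G` of trajectories in the fully time-expanded network `G_T` of the
auxiliary graph that end at a timed terminal node; arc copies inherit the transit times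
of their underlying arcs. -/
def trajG {N : Type*} (P : N → Finset (Finset (N × N))) (τ : N × N → ℕ) (T : ℕ) :
    Set (List (NodeCopy N × ℕ) × NodeCopy N) :=
  {Q | IsTrajectory (AuxArc P) (fun x y => τ (x.1, y.1)) T Q ∧ Q.2.2 = none}

/-- The first node of the trajectory `(l, e)`: the tail of its first movement arc, or the final
node `e` if there is no movement arc. -/
def nextNode {α : Type*} (l : List (α × ℕ)) (e : α) : α :=
  match l with
  | [] => e
  | y :: _ => y.1

/-- The deadline for arriving at `nextNode l e`: the first departure time of `l`, or the horizon
`T` if `l` is empty. -/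
def nextTime {α : Type*} (T : ℕ) (l : List (α × ℕ)) : ℕ :=
  match l with
  | [] => T
  | y :: _ => y.2

/-- The conditions of `IsTrajectory` other than nonemptiness, by recursion on the list of
departures. -/
def PreTraj {α : Type*} (Arc : α → α → Prop) (τ : α → α → ℕ) (T : ℕ) (e : α) :
    List (α × ℕ) → Prop
  | [] => True
  | x :: l => Arc x.1 (nextNode l e) ∧ x.2 + τ x.1 (nextNode l e) ≤ nextTime T l ∧ x.2 ≤ T ∧
      PreTraj Arc τ T e l

theorem isTrajectory_iff {α : Type*} (Arc : α → α → Prop) (τ : α → α → ℕ) (T : ℕ)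
    (l : List (α × ℕ)) (e : α) :
    IsTrajectory Arc τ T (l, e) ↔ l ≠ [] ∧ PreTraj Arc τ T e l := by
  induction l with
  | nil => simp [IsTrajectory]
  | cons x l ih =>
    cases l with
    | nil => simp [IsTrajectory, List.Chain', PreTraj, nextNode, nextTime, and_assoc]
    | cons y l =>
      have h : PreTraj Arc τ T e (y :: l) ↔ IsTrajectory Arc τ T (y :: l, e) := by
        simp [ih]
      rw [PreTraj, h]
      simp only [IsTrajectory, List.Chain', nextNode, nextTime,
        List.isChain_cons_cons, List.getLast?_cons_cons, List.forall_mem_cons]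
      simp only [ne_eq, reduceCtorEq, not_false_eq_true, true_and]
      tauto

/-- The projection of a list of departures in the auxiliary graph to the flat network. -/
def proj {N : Type*} (l : List (NodeCopy N × ℕ)) : List (N × ℕ) :=
  l.map fun p => (p.1.1, p.2)

theorem nextNode_proj {N : Type*} (l : List (NodeCopy N × ℕ)) (e : NodeCopy N) :
    nextNode (proj l) e.1 = (nextNode l e).1 := by
  cases l <;> rfl

theorem nextTime_proj {N : Type*} (T : ℕ) (l : List (NodeCopy N × ℕ)) :
    nextTime T (proj l) = nextTime T l := by
  cases l <;> rfl

theorem preTraj_proj {N : Type*} {A : Finset (N × N)} {P : N → Finset (Finset (N × N))}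
    {τ : N × N → ℕ} {T : ℕ} (hsub : ∀ v : N, ∀ B ∈ P v, B ⊆ outAt A v)
    (e : NodeCopy N) (l : List (NodeCopy N × ℕ))
    (h : PreTraj (AuxArc P) (fun x y => τ (x.1, y.1)) T e l) :
    PreTraj (fun a b => (a, b) ∈ A) (fun a b => τ (a, b)) T e.1 (proj l) := by
  induction l with
  | nil => trivial
  | cons x l ih =>
    obtain ⟨⟨B, -, hBP, hB, -⟩, ht, hT, hl⟩ := h
    change (x.1.1, nextNode (proj l) e.1) ∈ A ∧
      x.2 + τ (x.1.1, nextNode (proj l) e.1) ≤ nextTime T (proj l) ∧ x.2 ≤ T ∧ _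
    rw [nextNode_proj, nextTime_proj]
    exact ⟨(Finset.mem_filter.1 (hsub _ B hBP hB)).1, ht, hT, ih hl⟩

/-- A trajectory of the auxiliary graph is determined by its projection and its final copy: the
part labelling each departure is the unique one containing the arc taken. -/
theorem proj_inj {N : Type*} {P : N → Finset (Finset (N × N))} {τ : N × N → ℕ} {T : ℕ}
    (hdisj : ∀ v : N, ∀ B ∈ P v, ∀ B' ∈ P v, B ≠ B' → Disjoint B B')
    (e : NodeCopy N) (l l' : List (NodeCopy N × ℕ))
    (h : PreTraj (AuxArc P) (fun x y => τ (x.1, y.1)) T e l)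
    (h' : PreTraj (AuxArc P) (fun x y => τ (x.1, y.1)) T e l')
    (heq : proj l = proj l') : l = l' := by
  induction l generalizing l' with
  | nil => cases l' with
    | nil => rfl
    | cons => simp [proj] at heq
  | cons x l ih => cases l' with
    | nil => simp [proj] at heq
    | cons x' l' =>
      obtain ⟨⟨B, hx, hBP, hB, -⟩, -, -, hl⟩ := h
      obtain ⟨⟨B', hx', hBP', hB', -⟩, -, -, hl'⟩ := h'
      obtain ⟨h1, h2⟩ := List.cons.inj heq
      obtain rfl := ih l' hl hl' h2
      obtain ⟨⟨v, o⟩, t⟩ := x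
      obtain ⟨⟨v', o'⟩, t'⟩ := x'
      obtain ⟨rfl, rfl⟩ := Prod.mk.inj h1
      have hBB : B = B' := by
        by_contra hne
        exact Finset.disjoint_left.1 (hdisj v B hBP B' hBP' hne) hB hB'
      simp only at hx hx'
      rw [hx, hx', hBB]

/-- Every trajectory of the flat network lifts to the auxiliary graph, ending at a terminal copy.
That the lift starts at a genuine copy lets an arc be prepended in the induction. -/
theorem exists_lift {N : Type*} {A : Finset (N × N)} {P : N → Finset (Finset (N × N))}
    {τ : N × N → ℕ} {T : ℕ} (hcover : ∀ v : N, ∀ a ∈ outAt A v, ∃ B ∈ P v, a ∈ B)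
    (e : N) (l : List (N × ℕ))
    (h : PreTraj (fun a b => (a, b) ∈ A) (fun a b => τ (a, b)) T e l) :
    ∃ l' : List (NodeCopy N × ℕ), proj l' = l ∧ IsCopy P (nextNode l' (e, none)) ∧
      PreTraj (AuxArc P) (fun x y => τ (x.1, y.1)) T (e, none) l' := by
  induction l with
  | nil => exact ⟨[], rfl, fun B hB => by simp [nextNode] at hB, trivial⟩
  | cons x l ih =>
    obtain ⟨hA, ht, hT, hl⟩ := h
    obtain ⟨l', rfl, hc, hl'⟩ := ih hl
    obtain ⟨B, hBP, hB⟩ := hcover x.1 _ (Finset.mem_filter.2 ⟨hA, rfl⟩)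
    have hn := nextNode_proj l' (e, none)
    simp only at hn
    rw [hn] at hB ht
    rw [nextTime_proj] at ht
    refine ⟨((x.1, some B), x.2) :: l', rfl, ?_, ⟨B, rfl, hBP, hB, hc⟩, ht, hT, hl'⟩
    intro B' hB'
    obtain rfl := Option.some.inj hB'
    exact hBP

/-- **Fact (trajectories of `D_T` vs. trajectories of `G_T`).**  The projection map,
which sends each timed node copy `(vⁱ,t)` of a trajectory in `G_T` to the timed node
`(v,t)` (the inverse of `φ_T`), is a bijection from the set `𝒬_G` of trajectories of
`G_T` ending at a timed terminal node onto the set `𝒬_D` of trajectories of `D_T`.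
In particular `φ_T` is a well-defined bijection and `|𝒬_D| = |𝒬_G|`. -/
theorem aux_graph_trajectory_bijection
    {N : Type*} (A : Finset (N × N)) (P : N → Finset (Finset (N × N)))
    (τ : N × N → ℕ) (T : ℕ) (hτ : ∀ a ∈ A, 0 < τ a)
    -- `𝒜_v` is a partition of `δ⁺_D(v)`
    (hsub : ∀ v : N, ∀ B ∈ P v, B ⊆ outAt A v)
    (hcover : ∀ v : N, ∀ a ∈ outAt A v, ∃ B ∈ P v, a ∈ B)
    (hdisj : ∀ v : N, ∀ B ∈ P v, ∀ B' ∈ P v, B ≠ B' → Disjoint B B') :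
    Set.BijOn
      (fun Q : List (NodeCopy N × ℕ) × NodeCopy N =>
        ((Q.1.map fun p => (p.1.1, p.2), Q.2.1) : List (N × ℕ) × N))
      (trajG P τ T) (trajD A τ T) := by
  refine ⟨?_, ?_, ?_⟩
  · rintro ⟨l, e⟩ ⟨h, -⟩
    obtain ⟨hne, hl⟩ := (isTrajectory_iff _ _ _ _ _).1 h
    exact (isTrajectory_iff _ _ _ _ _).2
      ⟨fun h0 => hne (List.map_eq_nil_iff.1 h0), preTraj_proj hsub e l hl⟩
  · rintro ⟨l, v, o⟩ ⟨h, ho⟩ ⟨l', v', o'⟩ ⟨h', ho'⟩ heq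
    obtain ⟨h1, h2⟩ := Prod.mk.inj heq
    simp only at ho ho' h2
    subst ho ho' h2
    rw [proj_inj hdisj _ l l' ((isTrajectory_iff _ _ _ _ _).1 h).2
      ((isTrajectory_iff _ _ _ _ _).1 h').2 h1]
  · rintro ⟨l, e⟩ h
    obtain ⟨hne, hl⟩ := (isTrajectory_iff (fun a b => (a, b) ∈ A) (fun a b => τ (a, b)) T l e).1 h
    obtain ⟨l', rfl, -, hl'⟩ := exists_lift hcover e l hl
    refine ⟨(l', (e, none)), ⟨(isTrajectory_iff _ _ _ _ _).2 ⟨?_, hl'⟩, rfl⟩, rfl⟩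
    rintro rfl
    exact hne rfl
end
end

section
/- Let 𝓘 = (D = (N,A), 𝒦) be an instance of SND-RR where D has a hub-and-spoke structure: N is partitioned into regions R_1,...,R_ℓ with hubs ℋ = {h_1,...,h_ℓ}, h_i ∈ R_i; every arc is either regional (both endpoints in the same region) or national (joining two distinct hubs); write ℛ(v) for the region of v and ℋ(v) for its hub. Suppose that for each commodity k ∈ 𝒦 the designated subgraph D^k consists of: the regional arcs of ℛ(o_k) and ℛ(d_k), together with, if ℋ(o_k) ≠ ℋ(d_k), all national arcs except those leaving ℋ(d_k) and those entering ℋ(o_k) and excluding the regional arcs leaving ℋ(o_k), and, if ℋ(o_k) = ℋ(d_k) = h, all national arcs except those leaving or entering h. Then the arc partition 𝒜 given by 𝒜_h = {A_1^h, A_2^h} with A_1^h = δ^+_D(h) ∩ RA and A_2^h = δ^+_D(h) ∩ NA for every hub h ∈ ℋ, and 𝒜_v = {δ^+_D(v)} for every non-hub node v, is a valid partition of A for 𝓘. -/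
/-!
Splitting an out-star by whether the head lies in the same region is a partition, so only
the compatibility with each `D^k` at a hub `v` needs an argument. If `v` is the hub of
`d_k`, no national arc of `D^k` leaves `v`, so the out-star of `v` in `D^k` lies in the
regional part. Otherwise no regional arc of `D^k` leaves `v`: either `v` lies outside the
regions of `o_k` and `d_k`, or it is the hub of `o_k` in the inter-region case, whose regional
out-arcs are excluded. Hence the out-star lies in the national part.
-/

noncomputable section

attribute [local instance] Classical.propDecidable

/-- `P` is a partition of the arcs of `D = (N,A)` in which, for each node `v`,
`P v` partitions the out-star `δ⁺_D(v)`. -/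
def IsOutPartition {N : Type*} (A : Finset (N × N))
    (P : N → Finset (Finset (N × N))) : Prop :=
  ∀ v : N, (∀ B ∈ P v, B ⊆ outAt A v) ∧
    ∀ a ∈ outAt A v, ∃! B : Finset (N × N), B ∈ P v ∧ a ∈ B

/-- The designated subgraph `D^k` of a commodity with origin `ok` and destination `dk` in
a hub-and-spoke network: the regional arcs of the regions of `ok` and `dk` (excluding, in
the inter-region case, the regional arcs leaving the hub `ℋ(o_k)`), together with, if
`ℋ(o_k) ≠ ℋ(d_k)`, all national arcs except those leaving `ℋ(d_k)` and those entering
`ℋ(o_k)`, and, if `ℋ(o_k) = ℋ(d_k) = h`, all national arcs except those leaving or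
entering `h`. -/
def hubDesignated {N R : Type*} (A : Finset (N × N)) (region : N → R) (hub : R → N)
    (ok dk : N) : Finset (N × N) :=
  A.filter fun a =>
    (region a.1 = region a.2 ∧
      (region a.1 = region ok ∨ region a.1 = region dk) ∧
      (hub (region ok) ≠ hub (region dk) → a.1 ≠ hub (region ok)))
    ∨ (region a.1 ≠ region a.2 ∧
      (if hub (region ok) = hub (region dk)
        then a.1 ≠ hub (region ok) ∧ a.2 ≠ hub (region ok)
        else a.1 ≠ hub (region dk) ∧ a.2 ≠ hub (region ok)))

/-- The arc partition for a hub-and-spoke network: at each hub `h` the out-star is split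
into its regional part `A₁ʰ = δ⁺(h) ∩ RA` and its national part `A₂ʰ = δ⁺(h) ∩ NA`, and
at every non-hub node the out-star is a single part. -/
def hubPartition {N R : Type*} (A : Finset (N × N)) (region : N → R) (hub : R → N) :
    N → Finset (Finset (N × N)) :=
  fun v =>
    if v = hub (region v) then
      {(outAt A v).filter fun a => region a.2 = region v,
        (outAt A v).filter fun a => region a.2 ≠ region v}
    else {outAt A v}

/-- **Hub-and-spoke networks.**  Let `D = (N,A)` be a hub-and-spoke network: nodes are
partitioned into regions (recorded by `region : N → R`) with a hub `hub i ∈ R_i` for each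
region, and every arc is either regional (both endpoints in one region) or national
(joining the hubs of two distinct regions).  If each commodity `k` has the designated
subgraph `D^k` described above, then the partition `𝒜` splitting the out-star of each hub
into its regional and national arcs, and keeping a single part at every other node, is a
valid partition of `A` for the instance. -/
theorem hub_and_spoke_partition_valid
    {N R K : Type*}
    (A : Finset (N × N)) (region : N → R) (hub : R → N)
    (hhub : ∀ i : R, region (hub i) = i)
    -- every arc is regional or national
    (hstruct : ∀ a ∈ A, region a.1 = region a.2 ∨
      (region a.1 ≠ region a.2 ∧ a.1 = hub (region a.1) ∧ a.2 = hub (region a.2)))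
    (o d : K → N) :
    IsOutPartition A (hubPartition A region hub) ∧
    ∀ (k : K) (v : N), ∃ B ∈ hubPartition A region hub v,
      outAt (hubDesignated A region hub (o k) (d k)) v ⊆ B := by
  refine ⟨fun v => ?_, fun k v => ?_⟩
  · by_cases hv : v = hub (region v)
    · simp only [hubPartition, if_pos hv, Finset.mem_insert, Finset.mem_singleton]
      refine ⟨?_, fun a ha => ?_⟩
      · rintro B (rfl | rfl) <;> exact Finset.filter_subset _ _
      · by_cases hr : region a.2 = region v
        · refine ⟨_, ⟨Or.inl rfl, Finset.mem_filter.2 ⟨ha, hr⟩⟩, ?_⟩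
          rintro B ⟨rfl | rfl, hB⟩
          · rfl
          · exact absurd hr (Finset.mem_filter.1 hB).2
        · refine ⟨_, ⟨Or.inr rfl, Finset.mem_filter.2 ⟨ha, hr⟩⟩, ?_⟩
          rintro B ⟨rfl | rfl, hB⟩
          · exact absurd (Finset.mem_filter.1 hB).2 hr
          · rfl
    · simp only [hubPartition, if_neg hv, Finset.mem_singleton]
      refine ⟨?_, fun a ha => ⟨_, ⟨rfl, ha⟩, fun B hB => hB.1⟩⟩
      rintro B rfl
      exact Finset.Subset.refl _
  · by_cases hv : v = hub (region v)
    · simp only [hubPartition, if_pos hv]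
      by_cases hd : v = hub (region (d k))
      · -- At the destination hub every national out-arc is excluded from `D^k`.
        refine ⟨_, Finset.mem_insert_self _ _, fun a ha => ?_⟩
        simp only [outAt, hubDesignated, Finset.mem_filter] at ha ⊢
        obtain ⟨⟨haA, hk⟩, rfl⟩ := ha
        refine ⟨⟨haA, rfl⟩, ?_⟩
        rcases hk with hk | ⟨-, hk⟩
        · exact hk.1.symm
        · split_ifs at hk with he
          · exact absurd (hd.trans he.symm) hk.1
          · exact absurd hd hk.1
      · -- A regional out-arc of `D^k` would place `v` in the origin or destination region,
        -- so `v` would be the origin hub, which has no regional out-arcs unless it is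
        -- also the destination hub.
        refine ⟨_, Finset.mem_insert_of_mem (Finset.mem_singleton_self _), fun a ha => ?_⟩
        simp only [outAt, hubDesignated, Finset.mem_filter] at ha ⊢
        obtain ⟨⟨haA, hk⟩, rfl⟩ := ha
        refine ⟨⟨haA, rfl⟩, ?_⟩
        rcases hk with ⟨-, ho | hdr, hne⟩ | ⟨hn, -⟩
        · rw [ho] at hv
          exact absurd hv (hne fun he => hd (hv.trans he))
        · rw [hdr] at hv
          exact absurd hv hd
        · exact Ne.symm hn
    · simp only [hubPartition, if_neg hv]
      refine ⟨_, Finset.mem_singleton_self _, ?_⟩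
      exact Finset.filter_subset_filter _ (Finset.filter_subset _ _)
end
end
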